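/- Let β = i·tan((π − α)/4) and K = √(2 sin(α/2)/(1 + sin(α/2))). For every integer n ≥ 1 there exists a polynomial P_n ∈ ℂ[z] of degree exactly n with leading coefficient 1/(K·cos(α/2)^n) such that for all θ ∈ (α, 2π − α), P_n(e^{iθ}) = 2K·e^{inθ/2}·[ (iβ/(1 + β²))·e^{−iθ/2}·cos((n−1)λ_θ) + (1/(1 + β²))·cos(n λ_θ) ], where λ_θ = arccos(cos(θ/2)/cos(α/2)). -/

import Mathlib

open MeasureTheory Filter Set

/-!
Write `w = exp (iθ/2)`, `z = w ^ 2`, `c = cos (α/2)` and `λ = arccos (cos (θ/2) / c)`. Then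
`2 cos λ = (w + w⁻¹) / c`, so multiplying the Chebyshev recurrence
`cos ((n+2)λ) = 2 cos λ cos ((n+1)λ) - cos (nλ)` by `w ^ (n+2)` shows that `w ^ n cos (nλ)` equals
`Q n` evaluated at `z`, where `Q 0 = 1`, `Q 1 = (z + 1) / (2c)` and
`Q (n+2) = (z + 1) / c * Q (n+1) - z * Q n` (`eval_arcCheb`). The right-hand side of the claim is
therefore a linear combination of `Q n` and `Q (n-1)` at `z`. As `Q n` has degree at most `n`
and, for `n ≥ 1`, coefficient `1 / (2 c ^ n)` at `z ^ n`, the value of the leading coefficient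
follows from `1 + β ^ 2 = K ^ 2` (`one_sub_tan_sq`).
-/

open Polynomial in
/-- The polynomial `Q n` with `Q n (w ^ 2) = w ^ n * T n ((w + w⁻¹) / (2 * c))`, where `T n` is the
Chebyshev polynomial of the first kind and `w, c ≠ 0`. -/
noncomputable def arcCheb (c : ℂ) : ℕ → ℂ[X]
  | 0 => 1
  | 1 => C (1 / (2 * c)) * (X + 1)
  | (n + 2) => C (1 / c) * (X + 1) * arcCheb c (n + 1) - X * arcCheb c n

theorem natDegree_arcCheb_le (c : ℂ) : ∀ n, (arcCheb c n).natDegree ≤ n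
  | 0 => by simp [arcCheb]
  | 1 => by rw [arcCheb]; compute_degree
  | (n + 2) => by
    have h1 := natDegree_arcCheb_le c (n + 1)
    have h0 := natDegree_arcCheb_le c n
    rw [arcCheb]
    refine (Polynomial.natDegree_sub_le _ _).trans (max_le ?_ ?_)
    · have : (Polynomial.C (1 / c) * (Polynomial.X + 1)).natDegree ≤ 1 := by compute_degree
      exact Polynomial.natDegree_mul_le.trans (by omega)
    · exact Polynomial.natDegree_mul_le.trans (by rw [Polynomial.natDegree_X]; omega)

theorem coeff_arcCheb (c : ℂ) : ∀ n, (arcCheb c (n + 1)).coeff (n + 1) = 1 / (2 * c ^ (n + 1))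
  | 0 => by
    rw [arcCheb, Polynomial.coeff_C_mul]
    simp [Polynomial.coeff_one]
  | (n + 1) => by
    have h := coeff_arcCheb c n
    have h1 : (arcCheb c (n + 1)).coeff (n + 2) = 0 :=
      Polynomial.coeff_eq_zero_of_natDegree_lt
        (lt_of_le_of_lt (natDegree_arcCheb_le c (n + 1)) (by omega))
    have h0 : (arcCheb c n).coeff (n + 1) = 0 :=
      Polynomial.coeff_eq_zero_of_natDegree_lt
        (lt_of_le_of_lt (natDegree_arcCheb_le c n) (by omega))
    rw [arcCheb, mul_assoc, Polynomial.coeff_sub, Polynomial.coeff_C_mul, add_mul, one_mul,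
      Polynomial.coeff_add, Polynomial.coeff_X_mul, Polynomial.coeff_X_mul, h, h1, h0]
    rw [pow_succ c (n + 1)]
    simp only [one_div, mul_inv]
    ring

theorem eval_arcCheb (c w : ℂ) (l : ℝ) (hc : c ≠ 0) (h : w ^ 2 + 1 = 2 * c * w * (Real.cos l : ℂ)) :
    ∀ n : ℕ, (arcCheb c n).eval (w ^ 2) = w ^ n * ((Real.cos (n * l) : ℝ) : ℂ)
  | 0 => by simp [arcCheb]
  | 1 => by
    simp only [arcCheb, Polynomial.eval_mul, Polynomial.eval_C, Polynomial.eval_add,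
      Polynomial.eval_X, Polynomial.eval_one, h, Nat.cast_one, one_mul]
    field_simp
  | (n + 2) => by
    have h1 := eval_arcCheb c w l hc h (n + 1)
    have h0 := eval_arcCheb c w l hc h n
    have hcos : Real.cos ((n + 2 : ℕ) * l)
        = 2 * Real.cos l * Real.cos ((n + 1 : ℕ) * l) - Real.cos (n * l) := by
      have e2 : ((n + 2 : ℕ) : ℝ) * l = (n + 1 : ℕ) * l + l := by push_cast; ring
      have e0 : (n : ℝ) * l = (n + 1 : ℕ) * l - l := by push_cast; ring
      rw [e2, e0, Real.cos_add, Real.cos_sub]; ring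
    rw [hcos]
    simp only [arcCheb, Polynomial.eval_mul, Polynomial.eval_C, Polynomial.eval_add,
      Polynomial.eval_sub, Polynomial.eval_X, Polynomial.eval_one, h, h1, h0]
    push_cast
    field_simp
    ring

theorem one_sub_tan_sq (α : ℝ) (hα : α ∈ Set.Ioo 0 Real.pi) :
    1 - Real.tan ((Real.pi - α) / 4) ^ 2 = 2 * Real.sin (α / 2) / (1 + Real.sin (α / 2)) := by
  obtain ⟨h0, h1⟩ := hα
  have hs : Real.sin (α / 2) = 2 * Real.cos ((Real.pi - α) / 4) ^ 2 - 1 := by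
    rw [← Real.cos_two_mul, ← Real.cos_pi_div_two_sub]; congr 1; ring
  have hc : 0 < Real.cos ((Real.pi - α) / 4) :=
    Real.cos_pos_of_mem_Ioo ⟨by linarith, by linarith⟩
  rw [hs, Real.tan_eq_sin_div_cos, div_pow, Real.sin_sq]
  field_simp
  ring

theorem stmt10 (α : ℝ) (hα : α ∈ Set.Ioo 0 Real.pi) (n : ℕ) (hn : 1 ≤ n)
    (β : ℂ) (hβ : β = Complex.I * Real.tan ((Real.pi - α) / 4))
    (K : ℝ) (hK : K = Real.sqrt (2 * Real.sin (α / 2) / (1 + Real.sin (α / 2)))) :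
    ∃ P : Polynomial ℂ, P.degree = n ∧
      P.leadingCoeff = ((1 / (K * Real.cos (α / 2) ^ n) : ℝ) : ℂ) ∧
      ∀ θ ∈ Set.Ioo α (2 * Real.pi - α),
        P.eval (Complex.exp (θ * Complex.I)) =
          ((2 * K : ℝ) : ℂ) * Complex.exp (((n : ℝ) * θ / 2 : ℝ) * Complex.I) *
            ((Complex.I * β / (1 + β ^ 2)) * Complex.exp ((-(θ / 2) : ℝ) * Complex.I) *
                ((Real.cos (((n : ℝ) - 1) *
                    Real.arccos (Real.cos (θ / 2) / Real.cos (α / 2))) : ℝ) : ℂ) +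
              (1 / (1 + β ^ 2)) *
                ((Real.cos ((n : ℝ) *
                    Real.arccos (Real.cos (θ / 2) / Real.cos (α / 2))) : ℝ) : ℂ)) := by
  obtain ⟨h0, h1⟩ := hα
  obtain ⟨m, rfl⟩ : ∃ m, n = m + 1 := ⟨n - 1, by omega⟩
  have hs : 0 < Real.sin (α / 2) := Real.sin_pos_of_pos_of_lt_pi (by linarith) (by linarith)
  have hc : 0 < Real.cos (α / 2) := Real.cos_pos_of_mem_Ioo ⟨by linarith, by linarith⟩
  have hpos : 0 < 2 * Real.sin (α / 2) / (1 + Real.sin (α / 2)) := by positivity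
  have hK0 : 0 < K := hK ▸ Real.sqrt_pos.2 hpos
  have hKsq : K ^ 2 = 1 - Real.tan ((Real.pi - α) / 4) ^ 2 := by
    rw [one_sub_tan_sq α ⟨h0, h1⟩, hK, Real.sq_sqrt hpos.le]
  have hβK : 1 + β ^ 2 = (K : ℂ) ^ 2 := by
    rw [← Complex.ofReal_pow, hKsq, hβ, mul_pow, Complex.I_sq]; push_cast; ring
  have hcC : ((Real.cos (α / 2) : ℝ) : ℂ) ≠ 0 := Complex.ofReal_ne_zero.2 hc.ne'
  have hKC : (K : ℂ) ≠ 0 := Complex.ofReal_ne_zero.2 hK0.ne'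
  set c : ℝ := Real.cos (α / 2) with hcdef
  set P : Polynomial ℂ :=
    Polynomial.C (2 * K * (1 / (1 + β ^ 2))) * arcCheb c (m + 1)
      + Polynomial.C (2 * K * (Complex.I * β / (1 + β ^ 2))) * arcCheb c m with hP
  have hcoeff : P.coeff (m + 1) = ((1 / (K * c ^ (m + 1)) : ℝ) : ℂ) := by
    have hz : (arcCheb c m).coeff (m + 1) = 0 :=
      Polynomial.coeff_eq_zero_of_natDegree_lt
        (lt_of_le_of_lt (natDegree_arcCheb_le c m) (by omega))
    rw [hP, Polynomial.coeff_add, Polynomial.coeff_C_mul, Polynomial.coeff_C_mul, hz,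
      coeff_arcCheb, hβK]
    push_cast
    field_simp
    ring
  have hne : P.coeff (m + 1) ≠ 0 := by
    rw [hcoeff]; exact Complex.ofReal_ne_zero.2 (by positivity)
  have hle : P.natDegree ≤ m + 1 :=
    Polynomial.natDegree_add_le_of_degree_le
      ((Polynomial.natDegree_C_mul_le _ _).trans (natDegree_arcCheb_le _ _))
      ((Polynomial.natDegree_C_mul_le _ _).trans ((natDegree_arcCheb_le _ _).trans (by omega)))
  have hnat : P.natDegree = m + 1 := Polynomial.natDegree_eq_of_le_of_coeff_ne_zero hle hne
  refine ⟨P, ?_, ?_, ?_⟩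
  · exact Polynomial.degree_eq_of_le_of_coeff_ne_zero (Polynomial.degree_le_of_natDegree_le hle) hne
  · rw [Polynomial.leadingCoeff, hnat, hcoeff]
  · rintro θ ⟨ha, hb⟩
    -- `α/2 < θ/2 < π - α/2` puts `cos (θ/2) / c` in `[-1, 1]`, where `arccos` inverts `cos`.
    have hcos : Real.cos (Real.arccos (Real.cos (θ / 2) / c)) = Real.cos (θ / 2) / c := by
      apply Real.cos_arccos
      · rw [le_div_iff₀ hc, neg_one_mul, hcdef, ← Real.cos_pi_sub]
        exact Real.cos_le_cos_of_nonneg_of_le_pi (by linarith) (by linarith) (by linarith)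
      · rw [div_le_one hc]
        exact Real.cos_le_cos_of_nonneg_of_le_pi (by linarith) (by linarith) (by linarith)
    set l := Real.arccos (Real.cos (θ / 2) / c) with hl
    set w : ℂ := Complex.exp (((θ / 2 : ℝ) : ℂ) * Complex.I) with hw
    have hw0 : w ≠ 0 := Complex.exp_ne_zero _
    have hwinv : Complex.exp ((-(θ / 2) : ℝ) * Complex.I) = w⁻¹ := by
      rw [hw, ← Complex.exp_neg]; congr 1; push_cast; ring
    have hz : Complex.exp (θ * Complex.I) = w ^ 2 := by
      rw [hw, ← Complex.exp_nat_mul]; congr 1; push_cast; ring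
    have hwn : Complex.exp ((((m + 1 : ℕ) : ℝ) * θ / 2 : ℝ) * Complex.I) = w ^ (m + 1) := by
      rw [hw, ← Complex.exp_nat_mul]; congr 1; push_cast; ring
    have hrec : w ^ 2 + 1 = 2 * (c : ℂ) * w * (Real.cos l : ℂ) := by
      have h2 : 2 * ((Real.cos (θ / 2) : ℝ) : ℂ) = w + w⁻¹ := by
        rw [← hwinv, hw, Complex.ofReal_cos, Complex.two_cos]; congr 2; push_cast; ring
      rw [hcos, Complex.ofReal_div]
      field_simp
      linear_combination (-w) * h2 - mul_inv_cancel₀ hw0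
    have hm : (((m + 1 : ℕ) : ℝ) - 1) * l = m * l := by push_cast; ring
    rw [hz, hwn, hwinv, hm, hP, Polynomial.eval_add, Polynomial.eval_mul, Polynomial.eval_mul,
      Polynomial.eval_C, Polynomial.eval_C, eval_arcCheb c w l hcC hrec,
      eval_arcCheb c w l hcC hrec, hβK]
    push_cast
    field_simp
    ring
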